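/- Let X be a compact metric space with dim(X) ≥ 2 whose every closed neighborhood of some point also has dimension ≥ 2. Then there exists a point x₀ ∈ X and a sequence of embeddings φ_k : S¹ → X such that the images φ_k(S¹) are contained in the closed balls of radius 1/k around x₀, provided every positive-dimensional closed ball around x₀ is a Peano space of dimension ≥ 2. -/

import Mathlib

open Set

/-- Covering dimension at most `n`. -/
def CovDimLE (X : Type*) [TopologicalSpace X] (n : ℕ) : Prop :=
  ∀ U : Set (Set X), U.Finite → (∀ u ∈ U, IsOpen u) → ⋃₀ U = Set.univ →
    ∃ V : Set (Set X), V.Finite ∧ (∀ v ∈ V, IsOpen v) ∧ ⋃₀ V = Set.univ ∧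
      (∀ v ∈ V, ∃ u ∈ U, v ⊆ u) ∧ ∀ x : X, {v ∈ V | x ∈ v}.ncard ≤ n + 1

/-!
A compact, locally connected metric space `Y` without simple closed curves is tree-like, and this
forces its dimension to be at most one; hence small balls of dimension at least two contain circles.

Fix a base point `p`. The points separating `p` from `x` form a closed set which contains every arc
from `p` to `x`, varies continuously with `x` in the hyperspace of `Y`, and grows as `x` moves away
from `p`. A Whitney size function, strictly monotone for inclusion, turns it into a map from `Y` to
`[0, 1]`. A closed connected subset `C` of a fibre has a point `q`, its gate, through which every
path from `p` to `C` passes, so the cut set of any point of `C` contains that of `q`, and equality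
of their sizes gives `C = {q}`. The fibres are therefore totally disconnected, and a closed map with
such fibres does not lower dimension.
-/

open Filter Function Topology TopologicalSpace unitInterval

section Dimension

variable {X Y B : Type*} [TopologicalSpace X] [TopologicalSpace Y] [TopologicalSpace B] {m n : ℕ}

theorem CovDimLE.mono (hmn : m ≤ n) (hX : CovDimLE X m) : CovDimLE X n := by
  intro U hfin hopen hcover
  obtain ⟨V, hVfin, hVopen, hVcover, hVU, hcard⟩ := hX U hfin hopen hcover
  exact ⟨V, hVfin, hVopen, hVcover, hVU, fun x ↦ (hcard x).trans (by lia)⟩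

theorem covDimLE_unitInterval : CovDimLE I 1 := by
  intro U _ hopen hcover
  obtain ⟨δ, hδ, hball⟩ :=
    lebesgue_number_lemma_of_metric_sUnion isCompact_univ hopen hcover.ge
  obtain ⟨N, hN⟩ := exists_nat_one_div_lt hδ
  set M : ℝ := N + 1
  have hM : 0 < M := by positivity
  let v (i : ℕ) : Set I := {x | |x * M - i| < 1}
  have mem_v {i : ℕ} {x : I} (hx : x ∈ v i) : i = ⌊x * M⌋₊ ∨ i = ⌊x * M⌋₊ + 1 := by
    obtain ⟨hlt, hgt⟩ := abs_lt.1 (mem_ofPred.1 hx)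
    have hle := Nat.floor_le (mul_nonneg x.2.1 hM.le)
    have hfloor := Nat.lt_floor_add_one (x * M)
    have hupper : i < ⌊x * M⌋₊ + 2 := by exact_mod_cast (by linarith : (i : ℝ) < ⌊x * M⌋₊ + 2)
    have hlower : ⌊x * M⌋₊ < i + 1 := by exact_mod_cast (by linarith : (⌊x * M⌋₊ : ℝ) < i + 1)
    lia
  refine ⟨v '' Iic (N + 1), (finite_Iic _).image v, ?_, ?_, ?_, fun x ↦ ?_⟩
  · rintro _ ⟨i, -, rfl⟩
    exact isOpen_lt (by fun_prop) continuous_const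
  · refine eq_univ_of_forall fun x ↦ ⟨v ⌊x * M⌋₊, ⟨_, ?_, rfl⟩, ?_⟩
    · exact Nat.floor_le_of_le (by push_cast; nlinarith [x.2.2])
    · have hle := Nat.floor_le (mul_nonneg x.2.1 hM.le)
      have hlt := Nat.lt_floor_add_one (x * M)
      exact mem_ofPred.2 (abs_lt.2 ⟨by linarith, by linarith⟩)
  · rintro _ ⟨i, hi, rfl⟩
    have hiM : (i : ℝ) ≤ M := by simpa [M] using (Nat.cast_le (α := ℝ)).2 hi
    let c : I := ⟨i / M, by positivity, div_le_one_of_le₀ hiM hM.le⟩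
    obtain ⟨u, hu, hcu⟩ := hball c trivial
    refine ⟨u, hu, fun x hx ↦ hcu ?_⟩
    have hxc : x * M - i = (x - i / M) * M := by field_simp
    rw [mem_ofPred, hxc, abs_mul, abs_of_pos hM, ← lt_div_iff₀ hM] at hx
    exact Metric.mem_ball.2 (hx.trans hN)
  · calc {w ∈ v '' Iic (N + 1) | x ∈ w}.ncard
        ≤ ({v ⌊x * M⌋₊, v (⌊x * M⌋₊ + 1)} : Set (Set I)).ncard := by
          refine ncard_le_ncard ?_
          rintro _ ⟨⟨i, -, rfl⟩, hx⟩
          exact (mem_v hx).imp (congrArg v) (congrArg v)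
      _ ≤ 1 + 1 := (ncard_insert_le _ _).trans (by rw [ncard_singleton])

theorem exists_disjoint_open_refinement [T2Space Y] {S : Set Y} (hS : IsCompact S)
    (hdisc : IsTotallyDisconnected S) {U : Set (Set Y)} (hopen : ∀ u ∈ U, IsOpen u)
    (hcover : S ⊆ ⋃₀ U) :
    ∃ P : Set (Set Y), P.Finite ∧ (∀ o ∈ P, IsOpen o) ∧ (∀ o ∈ P, ∃ u ∈ U, o ⊆ u) ∧
      P.PairwiseDisjoint id ∧ S ⊆ ⋃₀ P := by
  have : CompactSpace S := isCompact_iff_compactSpace.1 hS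
  have : TotallyDisconnectedSpace S := totallyDisconnectedSpace_subtype_iff.2 hdisc
  let trace (u : U) : Opens S :=
    ⟨Subtype.val ⁻¹' u.1, (hopen u u.2).preimage continuous_subtype_val⟩
  have htrace : IsOpenCover trace := by
    refine IsOpenCover.mk (Opens.ext (eq_univ_of_forall fun x ↦ ?_))
    obtain ⟨u, hu, hxu⟩ := hcover x.2
    simpa only [Opens.coe_iSup, mem_iUnion] using ⟨⟨u, hu⟩, hxu⟩
  obtain ⟨k, W, hW, hWcover, hWdisj⟩ := htrace.exists_finite_nonempty_disjoint_clopen_cover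
  choose u hWu using fun j ↦ (hW j).2
  let L (j : Fin k) : Set Y := Subtype.val '' (W j : Set S)
  have hL (j : Fin k) : IsCompact (L j) := (W j).isClosed.isCompact.image continuous_subtype_val
  have hLdisj : Pairwise (Disjoint on fun j ↦ 𝓝ˢ (L j)) := fun i j hij ↦ by
    refine (SeparatedNhds.of_isCompact_isCompact (hL i) (hL j) ?_).disjoint_nhdsSet
    exact disjoint_image_of_injective Subtype.val_injective (Clopens.coe_disjoint.2 (hWdisj hij))
  obtain ⟨O, hO, hOdisj⟩ :=
    hLdisj.exists_mem_filter_basis_of_disjoint fun j ↦ hasBasis_nhdsSet (L j)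
  refine ⟨range fun j ↦ O j ∩ u j, finite_range _,
    forall_mem_range.2 fun j ↦ (hO j).1.inter (hopen _ (u j).2),
    forall_mem_range.2 fun j ↦ ⟨u j, (u j).2, inter_subset_right⟩, ?_, fun x hx ↦ ?_⟩
  · exact Pairwise.range_pairwise fun i j hij ↦
      (hOdisj hij).mono inter_subset_left inter_subset_left
  · obtain ⟨j, hj⟩ := mem_iUnion.1 (hWcover (mem_univ ⟨x, hx⟩))
    exact ⟨_, ⟨j, rfl⟩, (hO j).2 ⟨_, hj, rfl⟩, hWu j hj⟩

theorem exists_disjoint_open_refinement_preimage_nhds [T2Space Y] {f : Y → B}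
    (hf : IsProperMap f) {t : B} (hfib : IsTotallyDisconnected (f ⁻¹' {t})) {U : Set (Set Y)}
    (hopen : ∀ u ∈ U, IsOpen u) (hcover : f ⁻¹' {t} ⊆ ⋃₀ U) :
    ∃ N : Set B, IsOpen N ∧ t ∈ N ∧ ∃ P : Set (Set Y), P.Finite ∧ (∀ o ∈ P, IsOpen o) ∧
      (∀ o ∈ P, ∃ u ∈ U, o ⊆ u) ∧ P.PairwiseDisjoint id ∧ f ⁻¹' N ⊆ ⋃₀ P := by
  obtain ⟨P, hPfin, hPopen, hPU, hPdisj, hPcover⟩ := exists_disjoint_open_refinement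
    (hf.isCompact_preimage isCompact_singleton) hfib hopen hcover
  exact ⟨kernImage f (⋃₀ P),
    isClosedMap_iff_kernImage.1 hf.isClosedMap (isOpen_sUnion hPopen), fun x hx ↦ hPcover hx,
    P, hPfin, hPopen, hPU, hPdisj, fun x hx ↦ hx rfl⟩

theorem CovDimLE.of_isTotallyDisconnected_fibers [T2Space Y] [CompactSpace B] {f : Y → B}
    (hf : IsProperMap f) (hfib : ∀ t, IsTotallyDisconnected (f ⁻¹' {t})) (hB : CovDimLE B n) :
    CovDimLE Y n := by
  intro U _ hopen hcover
  choose N hNopen hN P hP using fun t ↦ exists_disjoint_open_refinement_preimage_nhds hf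
    (hfib t) hopen (hcover ▸ subset_univ _)
  obtain ⟨T, hT⟩ := CompactSpace.elim_nhds_subcover N fun t ↦ (hNopen t).mem_nhds (hN t)
  obtain ⟨V, hVfin, hVopen, hVcover, hVN, hcard⟩ := hB (N '' T) (T.finite_toSet.image N)
    (forall_mem_image.2 fun t _ ↦ hNopen t) (by rw [sUnion_image]; exact hT)
  have hVP : ∀ v ∈ V, ∃ Q : Set (Set Y), Q.Finite ∧ (∀ o ∈ Q, IsOpen o) ∧
      (∀ o ∈ Q, ∃ u ∈ U, o ⊆ u) ∧ Q.PairwiseDisjoint id ∧ f ⁻¹' v ⊆ ⋃₀ Q := fun v hv ↦ by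
    obtain ⟨_, ⟨t, -, rfl⟩, hvt⟩ := hVN v hv
    obtain ⟨hPfin, hPopen, hPU, hPdisj, hPcover⟩ := hP t
    exact ⟨P t, hPfin, hPopen, hPU, hPdisj, (preimage_mono hvt).trans hPcover⟩
  choose! Q hQfin hQopen hQU hQdisj hQcover using hVP
  let pieces (v : Set B) : Set (Set Y) := (f ⁻¹' v ∩ ·) '' Q v
  refine ⟨⋃ v ∈ V, pieces v, hVfin.biUnion fun v hv ↦ (hQfin v hv).image _, fun w hw ↦ ?_,
    eq_univ_of_forall fun x ↦ ?_, fun w hw ↦ ?_, fun x ↦ ?_⟩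
  · obtain ⟨v, hv, o, ho, rfl⟩ := mem_iUnion₂.1 hw
    exact ((hVopen v hv).preimage hf.continuous).inter (hQopen v hv o ho)
  · obtain ⟨v, hv, hxv⟩ : f x ∈ ⋃₀ V := hVcover ▸ mem_univ _
    obtain ⟨o, ho, hxo⟩ := hQcover v hv hxv
    exact ⟨_, mem_biUnion hv ⟨o, ho, rfl⟩, hxv, hxo⟩
  · obtain ⟨v, hv, o, ho, rfl⟩ := mem_iUnion₂.1 hw
    obtain ⟨u, hu, hou⟩ := hQU v hv o ho
    exact ⟨u, hu, inter_subset_right.trans hou⟩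
  · have hpiece : {w ∈ ⋃ v ∈ V, pieces v | x ∈ w} ⊆
        (fun v ↦ ⋃₀ {w ∈ pieces v | x ∈ w}) '' {v ∈ V | f x ∈ v} := by
      rintro w ⟨hw, hxw⟩
      obtain ⟨v, hv, o, ho, rfl⟩ := mem_iUnion₂.1 hw
      refine ⟨v, ⟨hv, hxw.1⟩, subset_antisymm (sUnion_subset ?_)
        (subset_sUnion_of_mem ⟨⟨o, ho, rfl⟩, hxw⟩)⟩
      rintro _ ⟨⟨o', ho', rfl⟩, hxo'⟩
      rw [(hQdisj v hv).elim_set ho' ho x hxo'.2 hxw.2]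
    have hfin : {v ∈ V | f x ∈ v}.Finite := hVfin.subset (sep_subset _ _)
    exact (ncard_le_ncard hpiece (hfin.image _)).trans ((ncard_image_le hfin).trans (hcard (f x)))

end Dimension

section Whitney

variable (Y : Type*) [MetricSpace Y] [SeparableSpace Y]

theorem exists_continuous_strictMono_nonemptyCompacts :
    ∃ w : NonemptyCompacts Y → I, Continuous w ∧ StrictMono w := by
  cases isEmpty_or_nonempty Y
  · have : IsEmpty (NonemptyCompacts Y) := ⟨fun K ↦ isEmptyElim K.nonempty.some⟩
    exact ⟨isEmptyElim, continuous_of_const fun K ↦ isEmptyElim K, fun K ↦ isEmptyElim K⟩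
  let q : ℕ → Y := denseSeq Y
  let bump (n : ℕ) (K : NonemptyCompacts Y) : ℝ := max 0 (1 - Metric.infDist (q n) K)
  let term (n : ℕ) (K : NonemptyCompacts Y) : ℝ := 1 / 2 / 2 ^ n * bump n K
  have term_nonneg (n K) : 0 ≤ term n K := by positivity
  have term_le (n K) : term n K ≤ 1 / 2 / 2 ^ n := mul_le_of_le_one_right (by positivity)
    (max_le zero_le_one (sub_le_self _ Metric.infDist_nonneg))
  have hsum (K) : Summable fun n ↦ term n K :=
    (summable_geometric_two' 1).of_nonneg_of_le (term_nonneg · K) (term_le · K)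
  let w (K : NonemptyCompacts Y) : I := ⟨∑' n, term n K, tsum_nonneg (term_nonneg · K),
    ((hsum K).tsum_le_tsum (term_le · K) (summable_geometric_two' 1)).trans
      (tsum_geometric_two' 1).le⟩
  refine ⟨w, Continuous.subtype_mk (continuous_tsum (fun n ↦ ?_) (summable_geometric_two' 1)
    fun n K ↦ ?_) _, fun K L hKL ↦ ?_⟩
  · exact continuous_const.mul
      (continuous_const.max (continuous_const.sub (Metric.lipschitz_infDist_set _).continuous))
  · simpa only [Real.norm_of_nonneg (term_nonneg n K)] using term_le n K
  obtain ⟨hsub, y, hyL, hyK⟩ := ssubset_iff_exists.1 (SetLike.coe_ssubset_coe.2 hKL)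
  have hy : 0 < Metric.infDist y K :=
    (K.isCompact.isClosed.notMem_iff_infDist_pos K.nonempty).1 hyK
  obtain ⟨n, hn⟩ := (denseRange_denseSeq Y).exists_dist_lt y
    (lt_min one_pos (half_pos hy))
  have hnL : Metric.infDist (q n) L ≤ dist y (q n) := by
    simpa only [dist_comm] using Metric.infDist_le_dist_of_mem hyL
  have hnK : Metric.infDist y K ≤ Metric.infDist (q n) K + dist y (q n) :=
    Metric.infDist_le_infDist_add_dist
  obtain ⟨hn1, hn2⟩ := lt_min_iff.1 hn
  refine Subtype.coe_lt_coe.1 ((hsum K).tsum_lt_tsum (i := n) (fun m ↦ ?_) ?_ (hsum L))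
  · exact mul_le_mul_of_nonneg_left (max_le_max_left _ (sub_le_sub_left
      (Metric.infDist_le_infDist_of_subset hsub K.nonempty) _)) (by positivity)
  · exact mul_lt_mul_of_pos_left
      ((max_lt (by linarith) (by linarith)).trans_le (le_max_right _ _)) (by positivity)

end Whitney

section LoopErasure

variable {L Y : Type*} [LinearOrder L] [TopologicalSpace L]

theorem isClosed_disjoint_Ioo [OrderClosedTopology L] (B : Set L) :
    IsClosed {p : L × L | Disjoint B (Ioo p.1 p.2)} := by
  have hB : {p : L × L | Disjoint B (Ioo p.1 p.2)} = ⋂ b ∈ B, {p | b ≤ p.1 ∨ p.2 ≤ b} := by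
    ext p
    simp only [mem_ofPred_eq, disjoint_left, mem_Ioo, not_and_or, not_lt, mem_iInter]
  rw [hB]
  exact isClosed_biInter fun b _ ↦ (isClosed_le continuous_const continuous_fst).union
    (isClosed_le continuous_snd continuous_const)

/-- The closed set `A` of times survives a partial erasure of loops of the curve `f`: the erased
times fall into gaps of `A` at whose two ends `f` takes the same value. -/
structure IsLoopErasure (f : L → Y) (A : Set L) : Prop where
  isClosed : IsClosed A
  exists_gap : ∀ x, ∃ u ∈ A, ∃ v ∈ A, u ≤ x ∧ x ≤ v ∧ f u = f v ∧ Disjoint A (Ioo u v)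

theorem isLoopErasure_univ (f : L → Y) : IsLoopErasure f univ where
  isClosed := isClosed_univ
  exists_gap x := ⟨x, trivial, x, trivial, le_rfl, le_rfl, rfl, by simp⟩

variable [OrderClosedTopology L] {f : L → Y} {A : Set L}

theorem IsLoopErasure.sInter [CompactSpace L] [TopologicalSpace Y] [T2Space Y] {f : L → Y}
    (hf : Continuous f) {c : Set (Set L)} (hc : ∀ A ∈ c, IsLoopErasure f A)
    (hchain : IsChain (· ⊆ ·) c) (hne : c.Nonempty) : IsLoopErasure f (⋂₀ c) where
  isClosed := isClosed_sInter fun A hA ↦ (hc A hA).isClosed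
  exists_gap x := by
    let K (A : c) : Set (L × L) := {p | p.1 ∈ A.1 ∧ p.2 ∈ A.1 ∧ p.1 ≤ x ∧ x ≤ p.2 ∧
      f p.1 = f p.2 ∧ Disjoint (⋂₀ c) (Ioo p.1 p.2)}
    have hKclosed (A : c) : IsClosed (K A) := by
      have hA := (hc A A.2).isClosed
      exact (hA.preimage continuous_fst).inter <| (hA.preimage continuous_snd).inter <|
        (isClosed_le continuous_fst continuous_const).inter <|
        (isClosed_le continuous_const continuous_snd).inter <|
        (isClosed_eq (hf.comp continuous_fst) (hf.comp continuous_snd)).inter <|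
        isClosed_disjoint_Ioo _
    have hKne (A : c) : (K A).Nonempty := by
      obtain ⟨u, hu, v, hv, hux, hxv, huv, hdisj⟩ := (hc A A.2).exists_gap x
      exact ⟨(u, v), hu, hv, hux, hxv, huv, hdisj.mono_left (sInter_subset_of_mem A.2)⟩
    have hKmono {A B : c} (hAB : A.1 ⊆ B.1) : K A ⊆ K B :=
      fun p hp ↦ ⟨hAB hp.1, hAB hp.2.1, hp.2.2⟩
    have hKdir : Directed (· ⊇ ·) K := fun A B ↦ (hchain.total A.2 B.2).elim
      (fun hAB ↦ ⟨A, subset_rfl, hKmono hAB⟩) fun hBA ↦ ⟨B, hKmono hBA, subset_rfl⟩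
    have : Nonempty c := hne.to_subtype
    obtain ⟨p, hp⟩ := IsCompact.nonempty_iInter_of_directed_nonempty_isCompact_isClosed K hKdir
      hKne (fun A ↦ (hKclosed A).isCompact) hKclosed
    have hpK (A : c) : p ∈ K A := mem_iInter.1 hp A
    exact ⟨p.1, fun A hA ↦ (hpK ⟨A, hA⟩).1, p.2, fun A hA ↦ (hpK ⟨A, hA⟩).2.1,
      (hpK (Classical.arbitrary c)).2.2⟩

theorem IsLoopErasure.sdiff_Ioo (hA : IsLoopErasure f A) {u v : L} (hu : u ∈ A) (hv : v ∈ A)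
    (huv : f u = f v) : IsLoopErasure f (A \ Ioo u v) where
  isClosed := hA.isClosed.sdiff isOpen_Ioo
  exists_gap x := by
    obtain ⟨a, ha, b, hb, hax, hxb, hab, hdisj⟩ := hA.exists_gap x
    have hdisj' : Disjoint (A \ Ioo u v) (Ioo a b) := hdisj.mono_left sdiff_subset
    have hgap {w : L} (hw : w ∈ A) : w ≤ a ∨ b ≤ w := by
      simpa only [mem_Ioo, not_and_or, not_lt] using disjoint_left.1 hdisj hw
    by_cases hx : u ≤ x ∧ x ≤ v
    · exact ⟨u, ⟨hu, fun h ↦ h.1.false⟩, v, ⟨hv, fun h ↦ h.2.false⟩, hx.1, hx.2, huv,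
        disjoint_sdiff_left⟩
    · refine ⟨a, ⟨ha, fun h ↦ ?_⟩, b, ⟨hb, fun h ↦ ?_⟩, hax, hxb, hab, hdisj'⟩
      · rcases hgap hv with hva | hbv
        · exact h.2.not_ge hva
        · exact hx ⟨h.1.le.trans hax, hxb.trans hbv⟩
      · rcases hgap hu with hua | hbu
        · exact hx ⟨hua.trans hax, hxb.trans h.2.le⟩
        · exact h.1.not_ge hbu

theorem exists_minimal_isLoopErasure [CompactSpace L] [TopologicalSpace Y] [T2Space Y]
    (hf : Continuous f) : ∃ A, Minimal (IsLoopErasure f) A := by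
  obtain ⟨A, -, hA⟩ := zorn_superset_nonempty {A | IsLoopErasure f A}
    (fun c hc hchain hne ↦ ⟨⋂₀ c, .sInter hf hc hchain hne, fun A ↦ sInter_subset_of_mem⟩)
    univ (isLoopErasure_univ f)
  exact ⟨A, hA⟩

theorem disjoint_Ioo_of_minimal_isLoopErasure (hA : Minimal (IsLoopErasure f) A) {u v : L}
    (hu : u ∈ A) (hv : v ∈ A) (huv : f u = f v) : Disjoint A (Ioo u v) :=
  disjoint_left.2 fun _ hw ↦ (hA.le_of_le (hA.prop.sdiff_Ioo hu hv huv) sdiff_subset hw).2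

theorem eq_of_minimal_isLoopErasure (hA : Minimal (IsLoopErasure f) A) {x u v u' v' : L}
    (hu : u ∈ A) (hv : v ∈ A) (hu' : u' ∈ A) (hv' : v' ∈ A) (hux : u ≤ x) (hxv : x ≤ v)
    (hux' : u' ≤ x) (hxv' : x ≤ v') (huv : f u = f v) (huv' : f u' = f v') : f u = f u' := by
  wlog huu' : u ≤ u' generalizing u v u' v'
  · exact (this hu' hv' hu hv hux' hxv' hux hxv huv' huv (le_of_not_ge huu')).symm
  rcases huu'.eq_or_lt with rfl | hlt
  · rfl
  · have hvu' : v ≤ u' := not_lt.1 fun h ↦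
      disjoint_left.1 (disjoint_Ioo_of_minimal_isLoopErasure hA hu hv huv) hu' ⟨hlt, h⟩
    rw [huv, (hux'.trans hxv).antisymm hvu']

theorem exists_continuous_ordConnected_fibers [CompactSpace L] [TopologicalSpace Y] [T2Space Y]
    (hf : Continuous f) : ∃ g : L → Y, Continuous g ∧ range g ⊆ range f ∧
      (∀ y, (g ⁻¹' {y}).OrdConnected) ∧ ∀ x, IsMin x ∨ IsMax x → g x = f x := by
  obtain ⟨A, hA⟩ := exists_minimal_isLoopErasure hf
  have hclosed := hA.prop.isClosed
  choose u hu v hv hux hxv huv _ using hA.prop.exists_gap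
  have gap_eq {x a b : L} (ha : a ∈ A) (hb : b ∈ A) (hax : a ≤ x) (hxb : x ≤ b)
      (hab : f a = f b) : f (u x) = f a :=
    eq_of_minimal_isLoopErasure hA (hu x) (hv x) ha hb (hux x) (hxv x) hax hxb (huv x) hab
  refine ⟨f ∘ u, ?_, range_comp_subset_range u f, fun y ↦ ⟨?_⟩, fun x hx ↦ ?_⟩
  -- `f ∘ u` is the factorization of `(x, a, b) ↦ f a` through the compact space of gaps
  -- `[a, b] ∋ x`, which has `L` as a quotient.
  · let K : Set (L × L × L) := {p | p.2.1 ∈ A ∧ p.2.2 ∈ A ∧ p.2.1 ≤ p.1 ∧ p.1 ≤ p.2.2 ∧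
      f p.2.1 = f p.2.2}
    have hK : IsClosed K := (hclosed.preimage (by fun_prop)).inter <|
      (hclosed.preimage (by fun_prop)).inter <| (isClosed_le (by fun_prop) (by fun_prop)).inter <|
      (isClosed_le (by fun_prop) (by fun_prop)).inter <| isClosed_eq (by fun_prop) (by fun_prop)
    have : CompactSpace K := isCompact_iff_compactSpace.1 hK.isCompact
    have hproj : IsQuotientMap fun p : K ↦ p.1.1 := IsQuotientMap.of_surjective_continuous
      (fun x ↦ ⟨⟨(x, u x, v x), hu x, hv x, hux x, hxv x, huv x⟩, rfl⟩) (by fun_prop)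
    refine hproj.continuous_iff.2 ((by fun_prop : Continuous fun p : K ↦ f p.1.2.1).congr ?_)
    rintro ⟨p, ha, hb, hap, hpb, hab⟩
    exact (gap_eq ha hb hap hpb hab).symm
  · intro x hx x' hx' z hz
    have hends : f (u x) = f (v x') := hx.trans (hx'.symm.trans (huv x'))
    exact (gap_eq (hu x) (hv x') ((hux x).trans hz.1) (hz.2.trans (hxv x')) hends).trans hx
  · rcases hx with hx | hx
    · exact congrArg f (hx.eq_of_le (hux x))
    · exact (huv x).trans (congrArg f (hx.eq_of_ge (hxv x)))

end LoopErasure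

section Arc

variable {Y : Type*} [MetricSpace Y]

/-- The initial segment `[0, t]` of the unit interval as a point of the hyperspace. -/
def initialSegment (t : I) : NonemptyCompacts I := ⟨⟨Icc 0 t, isCompact_Icc⟩, 0, le_rfl, t.2.1⟩

theorem lipschitzWith_initialSegment : LipschitzWith 1 initialSegment := by
  have dist_min {r s t : I} (hr : r ≤ s) : dist r (min r t) ≤ dist s t := by
    have h := abs_min_sub_min_le_max (r : ℝ) s r t
    rwa [sub_self, abs_zero, max_eq_right (abs_nonneg _), min_eq_left (Subtype.coe_le_coe.2 hr)]
      at h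
  refine LipschitzWith.mk_one fun s t ↦ ?_
  rw [Metric.NonemptyCompacts.dist_eq]
  refine Metric.hausdorffDist_le_of_mem_dist dist_nonneg (fun r hr ↦ ?_) fun r hr ↦ ?_
  · exact ⟨min r t, ⟨unitInterval.nonneg', min_le_right _ _⟩, dist_min hr.2⟩
  · exact ⟨min r s, ⟨unitInterval.nonneg', min_le_right _ _⟩, dist_comm s t ▸ dist_min hr.2⟩

variable [SeparableSpace Y]

/- The parameter is the Whitney size of the part of the curve already traversed: it grows exactly
when the curve moves. -/
theorem exists_monotone_eq_iff_of_ordConnected_fibers {g : I → Y} (hg : Continuous g)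
    (hfib : ∀ y, (g ⁻¹' {y}).OrdConnected) :
    ∃ k : I → I, Continuous k ∧ Monotone k ∧ ∀ s t, k s = k t ↔ g s = g t := by
  obtain ⟨w, hw, hwmono⟩ := exists_continuous_strictMono_nonemptyCompacts Y
  let T (t : I) : NonemptyCompacts Y := (initialSegment t).map g hg
  have hT : Monotone T := fun s t hst ↦
    SetLike.coe_subset_coe.1 (image_mono (Icc_subset_Icc_right hst))
  have hTcont : Continuous T :=
    hg.nonemptyCompacts_map.comp lipschitzWith_initialSegment.continuous
  refine ⟨w ∘ T, hw.comp hTcont, hwmono.monotone.comp hT, fun s t ↦ ?_⟩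
  wlog hst : s ≤ t generalizing s t
  · rw [eq_comm, this t s (le_of_not_ge hst), eq_comm]
  rw [comp_apply, comp_apply]
  constructor
  · intro h
    have hTst : T t ≤ T s := ((hT hst).eq_of_not_lt fun hlt ↦ (hwmono hlt).ne h).ge
    obtain ⟨r, hr, hrt⟩ := hTst (mem_image_of_mem g ⟨t.2.1, le_rfl⟩)
    exact (hfib (g t)).out hrt rfl ⟨hr.2, hst⟩
  · intro h
    refine congrArg w ((hT hst).antisymm ?_)
    rintro _ ⟨r, hr, rfl⟩
    rcases le_total r s with hrs | hsr
    · exact mem_image_of_mem g ⟨hr.1, hrs⟩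
    · exact ⟨s, ⟨s.2.1, le_rfl⟩, ((hfib (g t)).out h rfl ⟨hsr, hr.2⟩ : g r = g t) ▸ h⟩

theorem exists_injective_path_of_ordConnected_fibers {g : I → Y} (hg : Continuous g)
    (hfib : ∀ y, (g ⁻¹' {y}).OrdConnected) (h01 : g 0 ≠ g 1) :
    ∃ γ : Path (g 0) (g 1), Injective γ ∧ range γ ⊆ range g := by
  obtain ⟨k, hk, hkmono, hkg⟩ := exists_monotone_eq_iff_of_ordConnected_fibers hg hfib
  have hlt : k 0 < k 1 := (hkmono zero_le_one).lt_of_ne fun h ↦ h01 ((hkg 0 1).1 h)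
  have hlt' : (k 0 : ℝ) < k 1 := hlt
  let κ (t : I) : I := (iccHomeoI (k 0 : ℝ) (k 1) hlt') ⟨k t, hkmono t.2.1, hkmono t.2.2⟩
  have hκ : Continuous κ := (iccHomeoI (k 0 : ℝ) (k 1) hlt').continuous.comp (by fun_prop)
  have hκg (s t) : κ s = κ t ↔ g s = g t :=
    ((iccHomeoI _ _ hlt').injective.eq_iff.trans
      (Subtype.mk_eq_mk.trans Subtype.ext_iff.symm)).trans (hkg s t)
  have hκ0 : κ 0 = 0 := Subtype.ext ((iccHomeoI_apply_coe _ _ _ _).trans (by simp))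
  have hκ1 : κ 1 = 1 := Subtype.ext
    ((iccHomeoI_apply_coe _ _ _ _).trans (div_self (sub_ne_zero.2 hlt'.ne')))
  have hsurj : Surjective κ := fun y ↦ mem_range_of_exists_le_of_exists_ge hκ
    ⟨0, hκ0.trans_le unitInterval.nonneg'⟩ ⟨1, unitInterval.le_one'.trans_eq hκ1.symm⟩
  have hquot : IsQuotientMap (⟨κ, hκ⟩ : C(I, I)) := .of_surjective_continuous hsurj hκ
  have hfactor : FactorsThrough (⟨g, hg⟩ : C(I, Y)) (⟨κ, hκ⟩ : C(I, I)) :=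
    fun s t hst ↦ (hκg s t).1 hst
  let γ : C(I, Y) := hquot.lift _ hfactor
  have hγ (t) : γ (κ t) = g t := DFunLike.congr_fun (hquot.lift_comp _ hfactor) t
  have hγ0 : γ 0 = g 0 := (congrArg γ hκ0).symm.trans (hγ 0)
  have hγ1 : γ 1 = g 1 := (congrArg γ hκ1).symm.trans (hγ 1)
  refine ⟨⟨γ, hγ0, hγ1⟩, hsurj.forall₂.2 fun s t hst ↦ ?_, ?_⟩
  · exact (hκg s t).2 ((hγ s).symm.trans (hst.trans (hγ t)))
  · exact range_subset_iff.2 (hsurj.forall.2 fun t ↦ ⟨t, (hγ t).symm⟩)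

theorem exists_injective_path {S : Set Y} {a b : Y} (h : JoinedIn S a b) (hab : a ≠ b) :
    ∃ γ : Path a b, Injective γ ∧ range γ ⊆ S := by
  obtain ⟨δ, hδ⟩ := h
  obtain ⟨g, hg, hrange, hfib, hends⟩ := exists_continuous_ordConnected_fibers δ.continuous
  obtain rfl : g 0 = a := (hends 0 (.inl isMin_bot)).trans δ.source
  obtain rfl : g 1 = b := (hends 1 (.inr isMax_top)).trans δ.target
  obtain ⟨γ, hγ, hγg⟩ := exists_injective_path_of_ordConnected_fibers hg hfib hab
  exact ⟨γ, hγ, hγg.trans (hrange.trans (range_subset_iff.2 hδ))⟩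

end Arc

section Peano

theorem continuous_of_tendstoUniformly_of_oscillation_le {Z Y : Type*} [TopologicalSpace Z]
    [PseudoMetricSpace Y] {F : ℕ → Z → Y} {f : Z → Y} {ε : ℕ → ℝ}
    (hF : TendstoUniformly F f atTop) (hε : Tendsto ε atTop (𝓝 0))
    (hosc : ∀ n x, ∀ᶠ t in 𝓝 x, dist (F n t) (F n x) ≤ ε n) : Continuous f := by
  refine continuous_iff_continuousAt.2 fun x ↦ Metric.tendsto_nhds.2 fun η hη ↦ ?_
  obtain ⟨n, hn, hεn⟩ := ((Metric.tendstoUniformly_iff.1 hF (η / 3) (by positivity)).and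
    (hε.eventually_lt_const (by positivity : 0 < η / 3))).exists
  filter_upwards [hosc n x] with t ht
  calc dist (f t) (f x)
      ≤ dist (f t) (F n t) + dist (F n t) (F n x) + dist (F n x) (f x) := dist_triangle4 ..
    _ < η / 3 + η / 3 + η / 3 :=
        add_lt_add (add_lt_add (hn t) (ht.trans_lt hεn)) (dist_comm (f x) _ ▸ hn x)
    _ = η := by ring

variable {Y : Type*}

/-- The step functions `g` on `[0, 1]` which follow, from `a` to `b`, a finite chain of points
any two consecutive ones of which lie in a common connected open set of diameter at most `ε`.
The real line is used as time so that concatenation is an unrestricted formula. -/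
inductive IsChainPath [PseudoMetricSpace Y] (ε : ℝ) : Y → Y → (ℝ → Y) → Prop
  | step {a b : Y} {V : Set Y} (hopen : IsOpen V) (hconn : IsPreconnected V) (ha : a ∈ V)
      (hb : b ∈ V) (hsmall : ∀ x ∈ V, ∀ y ∈ V, dist x y ≤ ε) :
      IsChainPath ε a b fun t ↦ if t < 1 then a else b
  | trans {a b c : Y} {g h : ℝ → Y} (hg : IsChainPath ε a b g) (hh : IsChainPath ε b c h) :
      IsChainPath ε a c fun t ↦ if t ≤ 1 / 2 then g (2 * t) else h (2 * t - 1)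

namespace IsChainPath

variable [PseudoMetricSpace Y] {ε : ℝ} {a b : Y} {g : ℝ → Y}

theorem apply_zero (hg : IsChainPath ε a b g) : g 0 = a := by
  induction hg with
  | step => simp
  | trans _ _ ihg _ => simpa using ihg

theorem apply_one (hg : IsChainPath ε a b g) : g 1 = b := by
  induction hg with
  | step => simp
  | trans _ _ _ ihh => norm_num [ihh]

theorem eventually_dist_le (hg : IsChainPath ε a b g) (x : ℝ) :
    ∀ᶠ t in 𝓝 x, dist (g t) (g x) ≤ ε := by
  induction hg generalizing x with
  | step _ _ ha hb hsmall =>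
    refine .of_forall fun t ↦ hsmall _ ?_ _ ?_ <;> dsimp only <;> split_ifs <;> assumption
  | @trans a b c g h hg hh ihg ihh =>
    have hleft : Tendsto (fun t : ℝ ↦ 2 * t) (𝓝 x) (𝓝 (2 * x)) :=
      Continuous.tendsto (by fun_prop) x
    have hright : Tendsto (fun t : ℝ ↦ 2 * t - 1) (𝓝 x) (𝓝 (2 * x - 1)) :=
      Continuous.tendsto (by fun_prop) x
    rcases lt_trichotomy x (1 / 2) with hx | hx | hx
    · filter_upwards [hleft.eventually (ihg _), eventually_lt_nhds hx] with t ht hlt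
      rwa [if_pos hlt.le, if_pos hx.le]
    · filter_upwards [hleft.eventually (ihg _), hright.eventually (ihh _)] with t htg hth
      have hmid : h (2 * x - 1) = g (2 * x) := by
        rw [hx, show (2 * (1 / 2) - 1 : ℝ) = 0 by norm_num, hh.apply_zero,
          show (2 * (1 / 2) : ℝ) = 1 by norm_num, hg.apply_one]
      rw [if_pos hx.le]
      split_ifs
      · exact htg
      · exact hmid ▸ hth
    · filter_upwards [hright.eventually (ihh _), eventually_gt_nhds hx] with t ht hgt
      rwa [if_neg hgt.not_ge, if_neg hx.not_ge]

end IsChainPath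

theorem exists_isChainPath_of_isPreconnected [PseudoMetricSpace Y] [LocallyConnectedSpace Y]
    {W : Set Y} (hW : IsOpen W) (hconn : IsPreconnected W) {ε : ℝ} (hε : 0 < ε) {a b : Y}
    (ha : a ∈ W) (hb : b ∈ W) : ∃ g, IsChainPath ε a b g ∧ ∀ t, g t ∈ W := by
  refine hconn.induction₂' (fun a b ↦ ∃ g, IsChainPath ε a b g ∧ ∀ t, g t ∈ W)
    (fun x hx ↦ ?_) ?_ ha hb
  · obtain ⟨V, hV, hVopen, hxV, hVconn⟩ := locallyConnectedSpace_iff_subsets_isOpen_isConnected.1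
      ‹_› x (W ∩ Metric.ball x (ε / 2))
      (inter_mem (hW.mem_nhds hx) (Metric.ball_mem_nhds x (by positivity)))
    have hsmall : ∀ y ∈ V, ∀ z ∈ V, dist y z ≤ ε := fun y hy z hz ↦
      (dist_triangle_right y z x).trans
        (by linarith [Metric.mem_ball.1 (hV hy).2, Metric.mem_ball.1 (hV hz).2])
    have hstep {y z : Y} (hy : y ∈ V) (hz : z ∈ V) :
        ∃ g, IsChainPath ε y z g ∧ ∀ t, g t ∈ W :=
      ⟨_, .step hVopen hVconn.isPreconnected hy hz hsmall, fun t ↦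
        by split_ifs; exacts [(hV hy).1, (hV hz).1]⟩
    filter_upwards [mem_nhdsWithin_of_mem_nhds (hVopen.mem_nhds hxV)] with y hy
    exact ⟨hstep hxV hy, hstep hy hxV⟩
  · rintro x y z - - - ⟨g, hg, hgW⟩ ⟨h, hh, hhW⟩
    exact ⟨_, hg.trans hh, fun t ↦ by split_ifs; exacts [hgW _, hhW _]⟩

theorem IsChainPath.exists_refinement [PseudoMetricSpace Y] [LocallyConnectedSpace Y] {ε ε' : ℝ}
    {a b : Y} {g : ℝ → Y} (hg : IsChainPath ε a b g) (hε' : 0 < ε') :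
    ∃ g', IsChainPath ε' a b g' ∧ ∀ t, dist (g t) (g' t) ≤ ε := by
  induction hg with
  | step hopen hconn ha hb hsmall =>
    obtain ⟨g', hg', hg'V⟩ := exists_isChainPath_of_isPreconnected hopen hconn hε' ha hb
    exact ⟨g', hg', fun t ↦ hsmall _ (by dsimp only; split_ifs <;> assumption) _ (hg'V t)⟩
  | trans _ _ ihg ihh =>
    obtain ⟨g', hg', hgg'⟩ := ihg
    obtain ⟨h', hh', hhh'⟩ := ihh
    exact ⟨_, hg'.trans hh', fun t ↦ by dsimp only; split_ifs; exacts [hgg' _, hhh' _]⟩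

variable [MetricSpace Y] [CompleteSpace Y]

theorem joinedIn_closedBall_of_isPreconnected [LocallyConnectedSpace Y] {V : Set Y}
    (hopen : IsOpen V) (hconn : IsPreconnected V) {r : ℝ} (hr : 0 < r)
    (hsmall : ∀ x ∈ V, ∀ y ∈ V, dist x y ≤ r) {a b : Y} (ha : a ∈ V) (hb : b ∈ V) :
    JoinedIn (Metric.closedBall a (3 * r)) a b := by
  let stage (n : ℕ) := {g : ℝ → Y // IsChainPath (r / 2 ^ n) a b g}
  have refine_stage (n : ℕ) (g : stage n) :
      ∃ g' : stage (n + 1), ∀ t, dist (g.1 t) (g'.1 t) ≤ r / 2 ^ n := by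
    obtain ⟨g', hg', hgg'⟩ := g.2.exists_refinement (by positivity : 0 < r / 2 ^ (n + 1))
    exact ⟨⟨g', hg'⟩, hgg'⟩
  choose refined hrefined using refine_stage
  let G (n : ℕ) : stage n :=
    n.rec ⟨_, .step hopen hconn ha hb (by simpa using hsmall)⟩ refined
  have hG (t : ℝ) (n : ℕ) : dist ((G n).1 t) ((G (n + 1)).1 t) ≤ 2 * r / 2 / 2 ^ n := by
    simpa using hrefined n (G n) t
  choose γ hγ using fun t ↦
    cauchySeq_tendsto_of_complete (cauchySeq_of_le_geometric_two (hG t))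
  have hGγ (n : ℕ) (t : ℝ) : dist ((G n).1 t) (γ t) ≤ 2 * r / 2 ^ n :=
    dist_le_of_le_geometric_two_of_tendsto (hG t) (hγ t) n
  have hgeom (c : ℝ) : Tendsto (fun n : ℕ ↦ c / 2 ^ n) atTop (𝓝 0) :=
    tendsto_const_nhds.div_atTop (tendsto_pow_atTop_atTop_of_one_lt one_lt_two)
  have hunif : TendstoUniformly (fun n ↦ (G n).1) γ atTop :=
    Metric.tendstoUniformly_iff.2 fun η hη ↦ (hgeom (2 * r)).eventually_lt_const hη |>.mono
      fun n hn t ↦ (dist_comm _ _).trans_lt ((hGγ n t).trans_lt hn)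
  have hcont : Continuous γ := continuous_of_tendstoUniformly_of_oscillation_le hunif (hgeom r)
    fun n ↦ (G n).2.eventually_dist_le
  have hγ0 : γ 0 = a := tendsto_nhds_unique (hγ 0)
    (tendsto_const_nhds.congr fun n ↦ (G n).2.apply_zero.symm)
  have hγ1 : γ 1 = b := tendsto_nhds_unique (hγ 1)
    (tendsto_const_nhds.congr fun n ↦ (G n).2.apply_one.symm)
  refine .ofLine hcont.continuousOn hγ0 hγ1 (image_subset_iff.2 fun t _ ↦ ?_)
  have hG0 : (G 0).1 t ∈ V := by
    change (if t < 1 then a else b) ∈ V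
    split_ifs <;> assumption
  calc dist (γ t) a ≤ dist ((G 0).1 t) (γ t) + dist ((G 0).1 t) a := dist_triangle_left ..
    _ ≤ 2 * r / 2 ^ 0 + r := add_le_add (hGγ 0 t) (hsmall _ hG0 a ha)
    _ = 3 * r := by ring

variable (Y) in
theorem locallyPathConnectedSpace_of_completeSpace [LocallyConnectedSpace Y] :
    LocallyPathConnectedSpace Y := by
  refine locallyPathConnectedSpace_iff_pathComponentIn_mem_nhds.2 fun x U hU hx ↦ ?_
  obtain ⟨ε, hε, hball⟩ := Metric.isOpen_iff.1 hU x hx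
  obtain ⟨V, hV, hVopen, hxV, hVconn⟩ := locallyConnectedSpace_iff_subsets_isOpen_isConnected.1
    ‹_› x (Metric.ball x (ε / 8)) (Metric.ball_mem_nhds x (by positivity))
  have hsmall : ∀ y ∈ V, ∀ z ∈ V, dist y z ≤ ε / 4 := fun y hy z hz ↦
    (dist_triangle_right y z x).trans
      (by linarith [Metric.mem_ball.1 (hV hy), Metric.mem_ball.1 (hV hz)])
  filter_upwards [hVopen.mem_nhds hxV] with y hy
  exact (joinedIn_closedBall_of_isPreconnected hVopen hVconn.isPreconnected (by positivity)
    hsmall hxV hy).mono ((Metric.closedBall_subset_ball (by linarith)).trans hball)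

end Peano

section CircleFree

/-- The spaces which contain no simple closed curve. -/
def CircleFree (Y : Type*) [TopologicalSpace Y] : Prop := ∀ φ : C(Circle, Y), ¬ Injective φ

section Path

variable {Y : Type*} [TopologicalSpace Y] {a b : Y}

theorem not_circleFree_of_injOn_loop (γ : Path a a) (hγ : InjOn γ {1}ᶜ) : ¬ CircleFree Y := by
  let e : AddCircle (1 : ℝ) ≃ₜ Circle := AddCircle.homeomorphCircle one_ne_zero
  have hγext : γ.extend 0 = γ.extend (0 + 1) := by simp
  let φ : C(AddCircle (1 : ℝ), Y) :=
    ⟨AddCircle.liftIco 1 0 γ.extend,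
      AddCircle.liftIco_continuous hγext γ.continuous_extend.continuousOn⟩
  have hφ : Injective φ := fun x y hxy ↦ by
    obtain ⟨s, hs, rfl⟩ := AddCircle.eq_coe_Ico x
    obtain ⟨t, ht, rfl⟩ := AddCircle.eq_coe_Ico y
    have hst : γ.extend s = γ.extend t := by
      simpa [φ, AddCircle.liftIco_zero_coe_apply hs, AddCircle.liftIco_zero_coe_apply ht] using hxy
    rw [γ.extend_apply (Ico_subset_Icc_self hs), γ.extend_apply (Ico_subset_Icc_self ht)] at hst
    exact congrArg _ (Subtype.mk.inj (hγ (fun h ↦ hs.2.ne (congrArg Subtype.val h))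
      (fun h ↦ ht.2.ne (congrArg Subtype.val h)) hst))
  exact fun h ↦ h (φ.comp e.symm) (hφ.comp e.symm.injective)

theorem not_circleFree_of_inter_range_subset {γ δ : Path a b} (hγ : Injective γ)
    (hδ : Injective δ) (h : range γ ∩ range δ ⊆ {a, b}) : ¬ CircleFree Y := by
  have endpoint_of_crossing {s t : I} (hst : γ s = δ t) : t = 0 ∨ t = 1 :=
    (h ⟨⟨s, hst⟩, ⟨t, rfl⟩⟩).imp (fun ht ↦ hδ (ht.trans δ.source.symm))
      fun ht ↦ hδ (ht.trans δ.target.symm)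
  have not_crossing {s t : I} (hs : (s : ℝ) ≤ 1 / 2) (ht : ¬ (t : ℝ) ≤ 1 / 2) (ht1 : t ≠ 1) :
      γ.trans δ.symm s ≠ γ.trans δ.symm t := fun hst ↦ by
    rw [Path.trans_apply, Path.trans_apply, dif_pos hs, dif_neg ht, Path.symm_apply] at hst
    rcases endpoint_of_crossing hst with h | h
    · have h : 1 - (2 * (t : ℝ) - 1) = 0 := congrArg Subtype.val h
      exact ht1 (Subtype.ext (show (t : ℝ) = 1 by linarith))
    · have h : 1 - (2 * (t : ℝ) - 1) = 1 := congrArg Subtype.val h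
      linarith
  refine not_circleFree_of_injOn_loop (γ.trans δ.symm) fun s hs t ht hst ↦ ?_
  by_cases hs2 : (s : ℝ) ≤ 1 / 2 <;> by_cases ht2 : (t : ℝ) ≤ 1 / 2
  · rw [Path.trans_apply, Path.trans_apply, dif_pos hs2, dif_pos ht2] at hst
    exact Subtype.ext (mul_left_cancel₀ two_ne_zero (Subtype.mk.inj (hγ hst)))
  · exact absurd hst (not_crossing hs2 ht2 ht)
  · exact absurd hst.symm (not_crossing ht2 hs2 hs)
  · rw [Path.trans_apply, Path.trans_apply, dif_neg hs2, dif_neg ht2] at hst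
    exact Subtype.ext (mul_left_cancel₀ two_ne_zero (sub_left_injective
      (Subtype.mk.inj (hδ.comp unitInterval.symm_bijective.injective hst))))

theorem exists_joinedIn_insert_compl {S B : Set Y} (h : JoinedIn S a b) (hB : IsClosed B)
    (hb : b ∈ B) : ∃ b' ∈ B, JoinedIn (S ∩ insert b' Bᶜ) a b' := by
  obtain ⟨γ, hγ⟩ := h
  obtain ⟨t, ht, hmin⟩ := (hB.preimage γ.continuous).isCompact.exists_isLeast ⟨1, by simpa⟩
  refine ⟨γ t, ht, ((γ.subpath 0 t).cast γ.source.symm rfl), fun s ↦ ?_⟩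
  obtain ⟨r, hr, hrs⟩ : γ.subpath 0 t s ∈ γ '' Icc 0 t :=
    γ.range_subpath_of_le 0 t t.2.1 ▸ mem_range_self s
  rw [Path.cast_coe, ← hrs]
  refine ⟨hγ r, or_iff_not_imp_right.2 fun hrB ↦ ?_⟩
  rw [hr.2.antisymm (hmin (not_not.1 hrB))]

/-- The points of `Y` which every path from `p` to `x` must visit. -/
def cutPoints (p x : Y) : Set Y := {z | ¬ JoinedIn {z}ᶜ p x}

end Path

variable {Y : Type*} [MetricSpace Y] [SeparableSpace Y] {a b : Y}

/- A path from `a` to `b` avoiding `γ s` contains an arc from some `γ u` with `u < s` to some `γ v`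
with `v > s` which meets the curve `γ` only at its ends, and together they bound a circle. -/
theorem CircleFree.range_subset_cutPoints (hY : CircleFree Y) {γ : Path a b} (hγ : Injective γ) :
    range γ ⊆ cutPoints a b := by
  rintro _ ⟨s, rfl⟩ hJ
  have hclosed {T : Set I} (hT : IsClosed T) : IsClosed (γ '' T) :=
    (hT.isCompact.image γ.continuous).isClosed
  obtain ⟨_, ⟨v, hv, rfl⟩, hJv⟩ := exists_joinedIn_insert_compl hJ (hclosed isClosed_Ici)
    ⟨1, s.2.2, γ.target⟩
  obtain ⟨_, ⟨u, hu, rfl⟩, hJu⟩ := exists_joinedIn_insert_compl hJv.symm (hclosed isClosed_Iic)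
    ⟨0, s.2.1, γ.source⟩
  have hus : u ≠ s := fun h ↦ hJu.target_mem.1.1 (congrArg γ h)
  have huv : γ u ≠ γ v := hγ.ne ((hu.lt_of_ne hus).trans_le hv).ne
  obtain ⟨δ, hδ, hδJ⟩ := exists_injective_path hJu.symm huv
  obtain ⟨ε, hε, hεγ⟩ := exists_injective_path (S := range γ)
    ⟨γ.subpath u v, fun t ↦ (γ.range_subpath u v).subset.trans (image_subset_range _ _) ⟨t, rfl⟩⟩
    huv
  refine not_circleFree_of_inter_range_subset hδ hε ?_ hY
  rintro y ⟨hyδ, hyε⟩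
  obtain ⟨t, rfl⟩ := hεγ hyε
  obtain ⟨⟨-, hyv⟩, hyu⟩ := hδJ hyδ
  rcases le_total t s with hts | hst
  · exact .inl (hyu.resolve_right fun h ↦ h ⟨t, hts, rfl⟩)
  · exact .inr (hyv.resolve_right fun h ↦ h ⟨t, hst, rfl⟩)

end CircleFree

section CutPoints

section TopologicalSpace

variable {Y : Type*} [TopologicalSpace Y] {p x y z : Y}

theorem right_mem_cutPoints : x ∈ cutPoints p x := fun h ↦ h.target_mem rfl

theorem isClosed_cutPoints [T2Space Y] (p x : Y) : IsClosed (cutPoints p x) := by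
  refine isOpen_compl_iff.1 (isOpen_iff_mem_nhds.2 fun z hz ↦ ?_)
  obtain ⟨γ, hγ⟩ := not_not.1 hz
  have hzγ : z ∉ range γ := by rintro ⟨t, rfl⟩; exact hγ t rfl
  filter_upwards [(isCompact_range γ.continuous).isClosed.isOpen_compl.mem_nhds hzγ] with w hw
  exact not_not.2 ⟨γ, fun t ht ↦ hw ⟨t, ht⟩⟩

theorem mem_cutPoints_of_joinedIn {W : Set Y} (h : JoinedIn W x y) (hzW : z ∉ W)
    (hz : z ∈ cutPoints p y) : z ∈ cutPoints p x :=
  fun hpx ↦ hz (hpx.trans (h.mono fun _ hw hwz ↦ hzW (hwz ▸ hw)))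

theorem cutPoints_subset_cutPoints (hz : z ∈ cutPoints p x) : cutPoints p z ⊆ cutPoints p x := by
  rintro q hq ⟨γ, hγ⟩
  obtain ⟨t, rfl⟩ : z ∈ range γ :=
    by_contra fun hzγ ↦ hz ⟨γ, fun t ht ↦ hzγ ⟨t, ht⟩⟩
  refine hq ⟨(γ.subpath 0 t).cast γ.source.symm rfl, fun s ↦ ?_⟩
  obtain ⟨r, -, hr⟩ := (γ.range_subpath 0 t).subset ⟨s, rfl⟩
  exact hr ▸ hγ r

theorem eq_of_mem_cutPoints_of_mem_cutPoints [T1Space Y] (hpx : Joined p x)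
    (hz : z ∈ cutPoints p x) (hx : x ∈ cutPoints p z) : x = z := by
  by_contra hxz
  obtain ⟨b, rfl | rfl, hJ⟩ := exists_joinedIn_insert_compl (joinedIn_univ.2 hpx)
    (toFinite {x, z}).isClosed (mem_insert x {z})
  · refine hz (hJ.mono ?_)
    rintro w ⟨-, rfl | hw⟩
    exacts [hxz, fun hwz ↦ hw (.inr hwz)]
  · refine hx (hJ.mono ?_)
    rintro w ⟨-, rfl | hw⟩
    exacts [Ne.symm hxz, fun hwx ↦ hw (.inl hwx)]

theorem cutPoints_subset_of_isPreconnected [T1Space Y] [LocallyPathConnectedSpace Y] {C : Set Y}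
    (hC : IsPreconnected C) (hp : p ∈ C) (hx : x ∈ C) : cutPoints p x ⊆ C := by
  refine fun z hz ↦ by_contra fun hzC ↦ hz ?_
  have hCz : C ⊆ {z}ᶜ := fun w hw hwz ↦ hzC (hwz ▸ hw)
  have hconn : IsConnected (connectedComponentIn {z}ᶜ p) :=
    isConnected_connectedComponentIn_iff.2 (hCz hp)
  have hopen : IsOpen (connectedComponentIn {z}ᶜ p) := isOpen_compl_singleton.connectedComponentIn
  exact ((hopen.isConnected_iff_isPathConnected.1 hconn).joinedIn p (mem_connectedComponentIn
    (hCz hp)) x (hC.subset_connectedComponentIn hp hCz hx)).mono (connectedComponentIn_subset _ _)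

end TopologicalSpace

variable {Y : Type*} [MetricSpace Y]

theorem CircleFree.mem_closure_cutPoints_sdiff [SeparableSpace Y] (hY : CircleFree Y) {q x : Y}
    (h : Joined q x) (hqx : q ≠ x) : q ∈ closure (cutPoints q x \ {q}) := by
  obtain ⟨γ, hγ, -⟩ := exists_injective_path (joinedIn_univ.2 h) hqx
  have : (𝓝[>] (0 : I)).NeBot := nhdsGT_neBot_of_exists_gt ⟨1, zero_lt_one⟩
  have hγ0 : Tendsto γ (𝓝[>] 0) (𝓝 q) :=
    (γ.continuous.tendsto' 0 q γ.source).mono_left nhdsWithin_le_nhds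
  refine mem_closure_of_tendsto hγ0 (eventually_mem_nhdsWithin.mono fun t ht ↦ ?_)
  exact ⟨hY.range_subset_cutPoints hγ ⟨t, rfl⟩, fun h ↦ ht.ne' (hγ (h.trans γ.source.symm))⟩

theorem CircleFree.exists_mem_cutPoints_of_isPreconnected [SeparableSpace Y]
    [LocallyPathConnectedSpace Y] (hY : CircleFree Y) {C : Set Y} (hC : IsPreconnected C)
    (hclosed : IsClosed C) {p c : Y} (hc : c ∈ C) (hp : ∀ x ∈ C, Joined p x) :
    ∃ q ∈ C, ∀ x ∈ C, q ∈ cutPoints p x := by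
  obtain ⟨q, hq, hpq⟩ :=
    exists_joinedIn_insert_compl (joinedIn_univ.2 (hp c hc)) hclosed hc
  refine ⟨q, hq, fun x hx ↦ ?_⟩
  obtain rfl | hqx := eq_or_ne q x
  · exact right_mem_cutPoints
  refine closure_minimal ?_ (isClosed_cutPoints p x)
    (hY.mem_closure_cutPoints_sdiff ((hp q hq).symm.trans (hp x hx)) hqx)
  rintro z ⟨hz, hzq⟩ hpx
  have hzC : z ∈ C := cutPoints_subset_of_isPreconnected hC hq hx hz
  have hpq : JoinedIn {z}ᶜ p q := hpq.mono (by
    rintro w ⟨-, rfl | hw⟩ hwz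
    exacts [hzq hwz.symm, hw (hwz ▸ hzC)])
  exact hz (hpq.symm.trans hpx)

variable [CompactSpace Y]

/-- The set `cutPoints p x` as a point of the hyperspace of `Y`. -/
def cutCompacts (p x : Y) : NonemptyCompacts Y :=
  ⟨⟨cutPoints p x, (isClosed_cutPoints p x).isCompact⟩, x, right_mem_cutPoints⟩

theorem dist_cutCompacts_le {W : Set Y} {ε : ℝ} (p : Y) {x y : Y} (h : JoinedIn W x y)
    (hW : ∀ u ∈ W, ∀ v ∈ W, dist u v ≤ ε) : dist (cutCompacts p x) (cutCompacts p y) ≤ ε := by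
  have exists_near {x y : Y} (h : JoinedIn W x y) {z : Y} (hz : z ∈ cutPoints p y) :
      ∃ z' ∈ cutPoints p x, dist z z' ≤ ε := by
    by_cases hzW : z ∈ W
    · exact ⟨x, right_mem_cutPoints, hW z hzW x h.source_mem⟩
    · refine ⟨z, mem_cutPoints_of_joinedIn h hzW hz, ?_⟩
      exact (dist_self z).trans_le (dist_nonneg.trans (hW x h.source_mem y h.target_mem))
  rw [Metric.NonemptyCompacts.dist_eq]
  exact Metric.hausdorffDist_le_of_mem_dist
    (dist_nonneg.trans (hW x h.source_mem y h.target_mem))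
    (fun z hz ↦ exists_near h.symm hz) fun z hz ↦ exists_near h hz

theorem continuous_cutCompacts [LocallyPathConnectedSpace Y] {β : Y → Y}
    (hβ : ∀ x y, Joined x y → β x = β y) : Continuous fun x ↦ cutCompacts (β x) x := by
  refine continuous_iff_continuousAt.2 fun y ↦ Metric.tendsto_nhds.2 fun ε hε ↦ ?_
  filter_upwards [pathComponentIn_mem_nhds (Metric.ball_mem_nhds y (by positivity : 0 < ε / 4))]
    with x hx
  have hyx : JoinedIn (Metric.ball y (ε / 4)) y x := hx
  rw [hβ y x hyx.joined]
  refine (dist_cutCompacts_le (ε := ε / 2) (β x) hyx.symm fun u hu v hv ↦ ?_).trans_lt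
    (half_lt_self hε)
  linarith [dist_triangle_right u v y, Metric.mem_ball.1 hu, Metric.mem_ball.1 hv]

theorem CircleFree.isTotallyDisconnected_fiber [LocallyPathConnectedSpace Y]
    (hY : CircleFree Y) {β : Y → Y} (hβ : ∀ x y, Joined x y → β x = β y)
    (hβx : ∀ x, Joined (β x) x) {w : NonemptyCompacts Y → I} (hw : Continuous w)
    (hwmono : StrictMono w) (t : I) :
    IsTotallyDisconnected ((fun x ↦ w (cutCompacts (β x) x)) ⁻¹' {t}) := by
  intro C hCt hC
  have hclosure : closure C ⊆ (fun x ↦ w (cutCompacts (β x) x)) ⁻¹' {t} :=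
    closure_minimal hCt (isClosed_singleton.preimage (hw.comp (continuous_cutCompacts hβ)))
  have hjoined {x y : Y} (hx : x ∈ closure C) (hy : y ∈ closure C) : Joined x y := by
    have := hC.closure.subset_connectedComponent hx hy
    rwa [← pathComponent_eq_connectedComponent] at this
  suffices (closure C).Subsingleton from this.anti subset_closure
  rcases (closure C).eq_empty_or_nonempty with hempty | ⟨c, hc⟩
  · exact hempty ▸ subsingleton_empty
  have hwt {x : Y} (hx : x ∈ closure C) : w (cutCompacts (β c) x) = t := by
    rw [hβ c x (hjoined hc hx)]
    exact hclosure hx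
  obtain ⟨q, hq, hqC⟩ := hY.exists_mem_cutPoints_of_isPreconnected hC.closure isClosed_closure hc
    fun x hx ↦ (hβx c).trans (hjoined hc hx)
  suffices ∀ x ∈ closure C, x = q from fun x hx y hy ↦ (this x hx).trans (this y hy).symm
  intro x hx
  have hle : cutCompacts (β c) q ≤ cutCompacts (β c) x := cutPoints_subset_cutPoints (hqC x hx)
  have hxq : cutCompacts (β c) q = cutCompacts (β c) x :=
    hle.eq_of_not_lt fun hlt ↦ (hwmono hlt).ne ((hwt hq).trans (hwt hx).symm)
  exact eq_of_mem_cutPoints_of_mem_cutPoints ((hβx c).trans (hjoined hc hx)) (hqC x hx)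
    (hxq.ge right_mem_cutPoints)

theorem CircleFree.covDimLE_one [LocallyConnectedSpace Y] (hY : CircleFree Y) : CovDimLE Y 1 := by
  have := locallyPathConnectedSpace_of_completeSpace Y
  obtain ⟨w, hw, hwmono⟩ := exists_continuous_strictMono_nonemptyCompacts Y
  let β (x : Y) : Y := (Quotient.mk (pathSetoid Y) x).out
  have hβx (x : Y) : Joined (β x) x := Quotient.mk_out (s := pathSetoid Y) x
  have hβ (x y : Y) (h : Joined x y) : β x = β y :=
    congrArg Quotient.out (Quotient.sound (s := pathSetoid Y) h)
  exact .of_isTotallyDisconnected_fibers (hw.comp (continuous_cutCompacts hβ)).isProperMap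
    (hY.isTotallyDisconnected_fiber hβ hβx hw hwmono) covDimLE_unitInterval

end CutPoints

theorem stmt_6_general {X : Type*} [MetricSpace X] [WeaklyLocallyCompactSpace X] {x₀ : X}
    (hdim : ∀ r : ℝ, 0 < r → ¬ CovDimLE (Metric.closedBall x₀ r) 1)
    (hlc : ∀ r : ℝ, 0 < r → LocallyConnectedSpace (Metric.closedBall x₀ r)) (k : ℕ) (hk : 0 < k) :
    ∃ φ : Circle → X, Continuous φ ∧ Topology.IsEmbedding φ ∧
      range φ ⊆ Metric.closedBall x₀ (1 / k) := by
  obtain ⟨s, hs, hcompact⟩ := Metric.exists_isCompact_closedBall x₀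
  have hr : 0 < min s (1 / k) := lt_min hs (by positivity)
  have := hlc _ hr
  have : CompactSpace (Metric.closedBall x₀ (min s (1 / k))) := isCompact_iff_compactSpace.1
    (hcompact.of_isClosed_subset Metric.isClosed_closedBall
      (Metric.closedBall_subset_closedBall (min_le_left _ _)))
  obtain ⟨φ, hφ⟩ : ∃ φ : C(Circle, Metric.closedBall x₀ (min s (1 / k))), Injective φ := by
    by_contra! h
    exact hdim _ hr (CircleFree.covDimLE_one h)
  have hcont : Continuous fun z ↦ (φ z : X) := continuous_subtype_val.comp φ.continuous
  refine ⟨_, hcont, (hcont.isClosedEmbedding (Subtype.val_injective.comp hφ)).isEmbedding, ?_⟩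
  exact range_subset_iff.2 fun z ↦
    Metric.closedBall_subset_closedBall (min_le_right _ _) (φ z).2

/-- Smaller and smaller embedded circles converging to a point of local dimension ≥ 2. -/
theorem stmt_6 {X : Type} [MetricSpace X] [CompactSpace X]
    (hdim : ¬ CovDimLE X 1)
    (h : ∃ x₀ : X, ∀ D : Set X, D ∈ nhds x₀ → IsClosed D → ¬ CovDimLE D 1) :
    ∃ x₀ : X,
      (∀ r : ℝ, 0 < r → ¬ CovDimLE (Metric.closedBall x₀ r) 0 →
          ConnectedSpace (Metric.closedBall x₀ r) ∧
          LocallyConnectedSpace (Metric.closedBall x₀ r) ∧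
          ¬ CovDimLE (Metric.closedBall x₀ r) 1) →
      ∀ k : ℕ, 0 < k → ∃ φ : Circle → X, Continuous φ ∧ Topology.IsEmbedding φ ∧
        Set.range φ ⊆ Metric.closedBall x₀ (1 / k) := by
  obtain ⟨x₀, hx₀⟩ := h
  have hball (r : ℝ) (hr : 0 < r) : ¬ CovDimLE (Metric.closedBall x₀ r) 1 :=
    hx₀ _ (Metric.closedBall_mem_nhds x₀ hr) Metric.isClosed_closedBall
  exact ⟨x₀, fun hpeano ↦ stmt_6_general hball fun r hr ↦
    (hpeano r hr fun h0 ↦ hball r hr (h0.mono zero_le_one)).2.1⟩
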